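/- For all odd natural numbers m,n with m,n ≥ 3, the integral ∫_ℝ ν_m(x)·ν_n(x)·e^{−x²}/(1+2x²)² dx equals √π·(n−1)(n−2)·(∏_{j=1}^{(n−3)/2}(n − 2(1+j) + 1))² / (2·n!) if m = n, and equals 0 if m ≠ n. -/

import Mathlib

/-- Even coefficients c_{2k}(n) of the generalized power series. -/
noncomputable def ceven (n k : ℕ) : ℂ :=
  if k = 0 then 1
  else if k = 1 then -(n : ℂ)
  else (-1) ^ k * 2 ^ k * (n : ℂ) * ((n : ℂ) - ((2 * (k : ℂ) - 1) ^ 2 + 1)) *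
    (∏ j ∈ Finset.Icc 1 (k - 2), ((n : ℂ) - 2 * (1 + (j : ℂ)))) /
      (Nat.factorial (2 * k) : ℂ)

/-- Odd coefficients: `codd n k` is c_{2k-1}(n), for k ≥ 1. -/
noncomputable def codd (n k : ℕ) : ℂ :=
  if k ≤ 1 then 1
  else (-1) ^ (k + 1) * 2 ^ (k - 1) * ((n : ℂ) - ((2 * ((k : ℂ) - 1)) ^ 2 + 1)) *
    (∏ j ∈ Finset.Icc 1 (k - 2), ((n : ℂ) - (2 * (1 + (j : ℂ)) - 1))) /
      (Nat.factorial (2 * k - 1) : ℂ)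

/-- μₙ(z) = Σ_{k≥0} c_{2k}(n)·z^{2k}. -/
noncomputable def muF (n : ℕ) (z : ℂ) : ℂ := ∑' k : ℕ, ceven n k * z ^ (2 * k)

/-- νₙ(z) = Σ_{k≥1} c_{2k-1}(n)·z^{2k-1}. -/
noncomputable def nuF (n : ℕ) (z : ℂ) : ℂ := ∑' k : ℕ, codd n (k + 1) * z ^ (2 * k + 1)

/-- βₙ = μₙ + νₙ. -/
noncomputable def betaF (n : ℕ) (z : ℂ) : ℂ := muF n z + nuF n z

/-!
Put `n = k + 3` with `k` even. The substitution `t = √2 x` turns the weight into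
`exp (-t² / 2) / (1 + t²)²`, and up to a constant factor `νₙ(t / √2)` becomes the Darboux transform
`y = (1 + t²) H' - (3 t + t³) H` of the Hermite polynomial `H = hermite k`. Indeed Hermite's
equation gives `y' = -(k + 3) (1 + t²) H`, from which the coefficients of `y` are read off; the
factor is fixed by the linear coefficient `-(k + 3) H(0)`. The same identity for `y'` and an
integration by parts move the Darboux operator from one factor of the weighted inner product to the
other, which leaves `k + 3` times the Gaussian inner product of two Hermite polynomials.
-/

open Polynomial MeasureTheory

section Hermite

lemma derivative_hermite_succ (k : ℕ) :
    derivative (hermite (k + 1)) = (k + 1 : ℤ[X]) * hermite k := by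
  induction k with
  | zero => simp
  | succ k ih =>
    have step : hermite (k + 1) = X * hermite k - derivative (hermite k) := hermite_succ k
    rw [hermite_succ (k + 1), ih]
    simp only [derivative_sub, derivative_mul, derivative_X, derivative_add, derivative_natCast,
      derivative_one, ih]
    push_cast
    linear_combination -((k : ℤ[X]) + 1) * step

lemma derivative_derivative_hermite (k : ℕ) :
    derivative (derivative (hermite k)) =
      X * derivative (hermite k) - (k : ℤ[X]) * hermite k := by
  have h := derivative_hermite_succ k
  simp only [hermite_succ, derivative_sub, derivative_mul, derivative_X] at h
  linear_combination -h

lemma coeff_hermite_add_two (k j : ℕ) :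
    ((j : ℤ) + 1) * (j + 2) * (hermite k).coeff (j + 2) = (j - k) * (hermite k).coeff j := by
  have h := congrArg (coeff · j) (derivative_derivative_hermite k)
  have coeff_X_mul_derivative :
      (X * derivative (hermite k)).coeff j = j * (hermite k).coeff j := by
    cases j with
    | zero => simp
    | succ j => rw [coeff_X_mul, coeff_derivative]; push_cast; ring
  simp only [coeff_sub, coeff_X_mul_derivative, coeff_natCast_mul, coeff_derivative] at h
  push_cast at h
  linear_combination h

lemma factorial_mul_coeff_hermite_two_mul (k i : ℕ) :
    ((2 * i).factorial : ℤ) * (hermite k).coeff (2 * i) =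
      (-1) ^ i * (∏ j ∈ Finset.range i, ((k : ℤ) - 2 * j)) * (hermite k).coeff 0 := by
  induction i with
  | zero => simp
  | succ i ih =>
    have h := coeff_hermite_add_two k (2 * i)
    rw [show 2 * (i + 1) = 2 * i + 2 by ring, Nat.factorial_succ, Nat.factorial_succ,
      Finset.prod_range_succ, pow_succ]
    push_cast at h ⊢
    linear_combination ((2 * i).factorial : ℤ) * h + (2 * (i : ℤ) - k) * ih

lemma factorial_two_mul_eq_prod_mul_coeff_hermite (r : ℕ) :
    ((2 * r).factorial : ℤ) =
      (-1) ^ r * (∏ j ∈ Finset.range r, (2 * (r : ℤ) - 2 * j)) * (hermite (2 * r)).coeff 0 := by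
  simpa using factorial_mul_coeff_hermite_two_mul (2 * r) r

lemma coeff_zero_hermite_ne_zero {k : ℕ} (hk : Even k) : (hermite k).coeff 0 ≠ 0 := by
  obtain ⟨r, rfl⟩ := hk.exists_two_nsmul
  intro h
  have h_fact := factorial_two_mul_eq_prod_mul_coeff_hermite r
  rw [smul_eq_mul] at h
  rw [h, mul_zero] at h_fact
  exact Nat.factorial_ne_zero _ (mod_cast h_fact)

end Hermite

section Darboux

variable {R : Type*} [CommRing R]

/-- The Darboux transformation `P ↦ (1 + x²) φ (P / φ)'` with seed `φ = (1 + x²) exp (x² / 2)`,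
which solves `φ'' - x φ' = 3 φ`. It carries the Hermite polynomials to the exceptional Hermite
polynomials, which are orthogonal for the weight `exp (-x² / 2) / (1 + x²)²`. -/
noncomputable def darboux (P : R[X]) : R[X] :=
  (1 + X ^ 2) * derivative P - (3 * X + X ^ 3) * P

lemma derivative_darboux (P : R[X]) :
    derivative (darboux P) =
      (1 + X ^ 2) * (derivative (derivative P) - X * derivative P - 3 * P) := by
  simp only [darboux, derivative_sub, derivative_mul, derivative_add, derivative_X_pow,
    derivative_X, derivative_one, derivative_ofNat, map_natCast]
  push_cast
  ring

lemma derivative_darboux_hermite (k : ℕ) :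
    derivative (darboux (hermite k)) = -(k + 3 : ℤ[X]) * ((1 + X ^ 2) * hermite k) := by
  rw [derivative_darboux, derivative_derivative_hermite]
  ring

lemma coeff_darboux_hermite_succ (k j : ℕ) :
    (darboux (hermite k)).coeff (j + 1) * (j + 1) =
      -(k + 3 : ℤ) * ((1 + X ^ 2) * hermite k).coeff j := by
  rw [← coeff_derivative, derivative_darboux_hermite,
    show (-(k + 3) : ℤ[X]) = C (-(k + 3) : ℤ) by simp, coeff_C_mul]

lemma coeff_one_darboux_hermite (k : ℕ) :
    (darboux (hermite k)).coeff 1 = -(k + 3 : ℤ) * (hermite k).coeff 0 := by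
  simpa [mul_coeff_zero] using coeff_darboux_hermite_succ k 0

lemma factorial_mul_coeff_darboux_hermite (k i : ℕ) :
    ((2 * i + 3).factorial : ℤ) * (darboux (hermite k)).coeff (2 * i + 3) =
      -(k + 3 : ℤ) * ((-1) ^ (i + 1) * (k + 2 - 4 * (i + 1) ^ 2) *
        ∏ j ∈ Finset.range i, ((k : ℤ) - 2 * j)) * (hermite k).coeff 0 := by
  have h := coeff_darboux_hermite_succ k (2 * i + 2)
  rw [add_mul, one_mul, coeff_add, coeff_X_pow_mul] at h
  have h_low := factorial_mul_coeff_hermite_two_mul k i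
  have h_high := factorial_mul_coeff_hermite_two_mul k (i + 1)
  rw [Finset.prod_range_succ] at h_high
  simp only [show 2 * (i + 1) = 2 * i + 2 by ring, Nat.factorial_succ] at h_high ⊢
  push_cast at h h_high ⊢
  linear_combination ((2 * i + 2) * (2 * i + 1) * (2 * i).factorial : ℤ) * h
    - (k + 3 : ℤ) * h_high - (k + 3 : ℤ) * (2 * i + 2) * (2 * i + 1) * h_low

lemma coeff_even_darboux_hermite {k j : ℕ} (hk : Even k) (hj : Even j) :
    (darboux (hermite k)).coeff j = 0 := by
  have coeff_odd {l : ℕ} (hl : Odd l) : (hermite k).coeff l = 0 :=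
    coeff_hermite_of_odd_add (hk.add_odd hl)
  match j with
  | 0 => simp [darboux, mul_coeff_zero, coeff_derivative, coeff_odd odd_one]
  | j + 1 =>
    have h := coeff_darboux_hermite_succ k j
    have hj' : Odd j := by grind
    have h_shift : (X ^ 2 * hermite k).coeff j = 0 := by
      rw [coeff_X_pow_mul']
      split_ifs with h2
      · exact coeff_odd (by grind)
      · rfl
    rw [add_mul, one_mul, coeff_add, coeff_odd hj', h_shift, add_zero, mul_zero] at h
    exact (mul_eq_zero.1 h).resolve_right (by positivity)

end Darboux

section PowerSeries

lemma prod_Icc_one_eq_prod_range {M : Type*} [CommMonoid M] (f : ℕ → M) (n : ℕ) :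
    ∏ j ∈ Finset.Icc 1 n, f j = ∏ j ∈ Finset.range n, f (j + 1) := by
  rw [Finset.range_eq_Ico, Finset.prod_Ico_add']
  rfl

lemma codd_one (n : ℕ) : codd n 1 = 1 := by simp [codd]

lemma codd_add_two (k i : ℕ) :
    codd (k + 3) (i + 2) = (-2) ^ (i + 1) * (k + 2 - 4 * (i + 1) ^ 2) *
      (∏ j ∈ Finset.range i, ((k : ℂ) - 2 * j)) / ((2 * i + 3).factorial : ℂ) := by
  rw [codd, if_neg (by omega), prod_Icc_one_eq_prod_range, neg_pow 2]
  congr 2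
  · push_cast
    ring
  · refine Finset.prod_congr rfl fun j _ ↦ ?_
    push_cast
    ring

lemma two_pow_mul_coeff_darboux_hermite (k i : ℕ) :
    2 ^ i * ((darboux (hermite k)).coeff (2 * i + 1) : ℂ) =
      -(k + 3) * (hermite k).coeff 0 * codd (k + 3) (i + 1) := by
  cases i with
  | zero => simp [codd_one, coeff_one_darboux_hermite]
  | succ i =>
    have h := congrArg (Int.cast (R := ℂ)) (factorial_mul_coeff_darboux_hermite k i)
    have h_fact : ((2 * i + 3).factorial : ℂ) ≠ 0 := mod_cast Nat.factorial_ne_zero _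
    rw [codd_add_two, mul_div_assoc', eq_div_iff h_fact, neg_pow 2]
    push_cast at h
    linear_combination 2 ^ (i + 1) * h

lemma aeval_darboux_hermite_eq_nuF {k : ℕ} (hk : Even k) (z : ℂ) :
    aeval ((√2 : ℝ) * z) (darboux (hermite k)) =
      -(k + 3) * (hermite k).coeff 0 * (√2 : ℝ) * nuF (k + 3) z := by
  have sqrt_two_sq : ((√2 : ℝ) : ℂ) ^ 2 = 2 := mod_cast Real.sq_sqrt zero_le_two
  let term (j : ℕ) : ℂ := (darboux (hermite k)).coeff j * ((√2 : ℝ) * z) ^ j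
  have term_odd (i : ℕ) : term (2 * i + 1) =
      -(k + 3) * (hermite k).coeff 0 * (√2 : ℝ) * (codd (k + 3) (i + 1) * z ^ (2 * i + 1)) := by
    have h := two_pow_mul_coeff_darboux_hermite k i
    rw [← sqrt_two_sq] at h
    simp only [term]
    linear_combination (√2 : ℝ) * z ^ (2 * i + 1) * h
  have support_term : Function.support term ⊆ Set.range fun i ↦ 2 * i + 1 := by
    intro j hj
    rcases Nat.even_or_odd' j with ⟨i, rfl | rfl⟩
    · simp [term, coeff_even_darboux_hermite hk (even_two_mul i)] at hj
    · exact ⟨i, rfl⟩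
  have odd_injective : Function.Injective fun i : ℕ ↦ 2 * i + 1 := fun a b h ↦ by simpa using h
  calc aeval ((√2 : ℝ) * z) (darboux (hermite k))
      = ∑ j ∈ Finset.range ((darboux (hermite k)).natDegree + 1), term j := by
        simp [aeval_eq_sum_range, term]
    _ = ∑' j, term j := by
        refine (tsum_eq_sum fun j hj ↦ ?_).symm
        simp [term, coeff_eq_zero_of_natDegree_lt (show _ < j by simpa using hj)]
    _ = ∑' i, term (2 * i + 1) := (odd_injective.tsum_eq support_term).symm
    _ = _ := by simp_rw [term_odd, tsum_mul_left, nuF]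

end PowerSeries

section GaussianIntegral

variable {R : Type*} [CommRing R] [Algebra R ℝ]

lemma hasDerivAt_exp_neg_sq_div_two (x : ℝ) :
    HasDerivAt (fun x : ℝ ↦ Real.exp (-(x ^ 2 / 2))) (-x * Real.exp (-(x ^ 2 / 2))) x := by
  refine ((hasDerivAt_pow 2 x).div_const 2).neg.exp.congr_deriv ?_
  simp only [Pi.neg_apply, Nat.cast_ofNat]
  ring

lemma integrable_aeval_mul_exp_neg_sq_div_two (P : R[X]) :
    Integrable fun x : ℝ ↦ aeval x P * Real.exp (-(x ^ 2 / 2)) := by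
  have integrable_pow (j : ℕ) : Integrable fun x : ℝ ↦ x ^ j * Real.exp (-(x ^ 2 / 2)) := by
    have hj : (-1 : ℝ) < j := neg_one_lt_zero.trans_le j.cast_nonneg
    simpa [neg_div, div_eq_inv_mul] using
      integrable_rpow_mul_exp_neg_mul_sq (b := 1 / 2) (by simp) hj
  simp_rw [aeval_eq_sum_range, Finset.sum_mul, Algebra.smul_def, mul_assoc]
  exact integrable_finsetSum _ fun j _ ↦ (integrable_pow j).const_mul _

lemma integrable_aeval_mul_exp_neg_sq_div_two_div (P : R[X]) (s : ℕ) :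
    Integrable fun x : ℝ ↦ aeval x P * Real.exp (-(x ^ 2 / 2)) / (1 + x ^ 2) ^ s := by
  refine (integrable_aeval_mul_exp_neg_sq_div_two P).mono ?_ (.of_forall fun x ↦ ?_)
  · refine (Continuous.div (P.continuous_aeval.mul (by fun_prop)) (by fun_prop)
      fun x ↦ ?_).aestronglyMeasurable
    positivity
  · rw [norm_div, Real.norm_of_nonneg (by positivity : 0 ≤ (1 + x ^ 2) ^ s)]
    exact div_le_self (norm_nonneg _) (one_le_pow₀ (le_add_of_nonneg_right (sq_nonneg x)))

/-- The unnormalised Gaussian expectation `P ↦ ∫ P(x) exp (-x² / 2) dx`, whose inner product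
`(P, Q) ↦ gaussianIntegral (P * Q)` makes the Hermite polynomials orthogonal. The coefficient ring
is arbitrary so that it applies to `hermite k : ℤ[X]` directly. -/
noncomputable def gaussianIntegral : R[X] →ₗ[R] ℝ where
  toFun P := ∫ x : ℝ, aeval x P * Real.exp (-(x ^ 2 / 2))
  map_add' P Q := by
    simp_rw [map_add, add_mul]
    exact integral_add (integrable_aeval_mul_exp_neg_sq_div_two P)
      (integrable_aeval_mul_exp_neg_sq_div_two Q)
  map_smul' c P := by
    simp_rw [map_smul, Algebra.smul_def, mul_assoc, RingHom.id_apply]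
    exact integral_const_mul _ _

lemma gaussianIntegral_apply (P : R[X]) :
    gaussianIntegral P = ∫ x : ℝ, aeval x P * Real.exp (-(x ^ 2 / 2)) := rfl

lemma gaussianIntegral_one : gaussianIntegral (1 : R[X]) = √(2 * Real.pi) := by
  have h := integral_gaussian (1 / 2)
  simpa [gaussianIntegral_apply, neg_div, div_eq_inv_mul] using h

lemma gaussianIntegral_X_mul_sub_derivative (P : R[X]) :
    gaussianIntegral (X * P - derivative P) = 0 := by
  refine integral_eq_zero_of_hasDerivAt_of_integrable (fun x ↦ ?_)
    (integrable_aeval_mul_exp_neg_sq_div_two _) (integrable_aeval_mul_exp_neg_sq_div_two (-P))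
  refine (((-P).hasDerivAt_aeval x).mul (hasDerivAt_exp_neg_sq_div_two x)).congr_deriv ?_
  simp only [map_neg, map_sub, map_mul, aeval_X]
  ring

lemma gaussianIntegral_hermite_succ_mul (k : ℕ) (Q : ℤ[X]) :
    gaussianIntegral (hermite (k + 1) * Q) = gaussianIntegral (hermite k * derivative Q) := by
  have h := gaussianIntegral_X_mul_sub_derivative (hermite k * Q)
  rw [← sub_eq_zero, ← map_sub, ← h, hermite_succ, derivative_mul]
  congr 1
  ring

lemma gaussianIntegral_hermite_mul_hermite (k l : ℕ) :
    gaussianIntegral (hermite k * hermite l) =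
      if k = l then k.factorial * √(2 * Real.pi) else 0 := by
  induction k generalizing l with
  | zero =>
    cases l with
    | zero => simp [gaussianIntegral_one]
    | succ l => rw [mul_comm, gaussianIntegral_hermite_succ_mul]; simp
  | succ k ih =>
    rw [gaussianIntegral_hermite_succ_mul]
    cases l with
    | zero => simp
    | succ l =>
      have h_deriv : hermite k * derivative (hermite (l + 1)) =
          (l + 1 : ℤ) • (hermite k * hermite l) := by
        rw [derivative_hermite_succ, zsmul_eq_mul]
        push_cast
        ring
      rw [h_deriv, map_smul, ih]
      by_cases hkl : k = l
      · subst hkl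
        simp only [↓reduceIte, zsmul_eq_mul, Nat.factorial_succ]
        push_cast
        ring
      · simp [hkl]

lemma hasDerivAt_mul_darboux (P Q : R[X]) (x : ℝ) :
    HasDerivAt
      (fun x : ℝ ↦ aeval x (P * darboux Q) * Real.exp (-(x ^ 2 / 2)) / (1 + x ^ 2))
      (aeval x (darboux P * darboux Q) * Real.exp (-(x ^ 2 / 2)) / (1 + x ^ 2) ^ 2 -
        aeval x (P * (X * derivative Q - derivative (derivative Q) + 3 * Q)) *
          Real.exp (-(x ^ 2 / 2))) x := by
  have hη : HasDerivAt (fun x : ℝ ↦ 1 + x ^ 2) (2 * x) x := by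
    simpa using (hasDerivAt_pow 2 x).const_add 1
  have hη0 : 1 + x ^ 2 ≠ 0 := by positivity
  refine ((((P * darboux Q).hasDerivAt_aeval x).mul (hasDerivAt_exp_neg_sq_div_two x)).div
    hη hη0).congr_deriv ?_
  have h_darboux : aeval x (darboux P) =
      (1 + x ^ 2) * aeval x (derivative P) - (3 * x + x ^ 3) * aeval x P := by
    simp [darboux, map_ofNat]
  simp only [derivative_mul, derivative_darboux, map_mul, map_add, map_sub, map_one, map_pow,
    map_ofNat, aeval_X, h_darboux, Pi.mul_apply]
  field_simp
  ring

lemma integral_darboux_mul_darboux (P Q : R[X]) :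
    ∫ x : ℝ, aeval x (darboux P * darboux Q) * Real.exp (-(x ^ 2 / 2)) / (1 + x ^ 2) ^ 2 =
      gaussianIntegral (P * (X * derivative Q - derivative (derivative Q) + 3 * Q)) := by
  have h_weighted := integrable_aeval_mul_exp_neg_sq_div_two_div (darboux P * darboux Q) 2
  have h_gauss := integrable_aeval_mul_exp_neg_sq_div_two
    (P * (X * derivative Q - derivative (derivative Q) + 3 * Q))
  rw [gaussianIntegral_apply, ← sub_eq_zero, ← integral_sub h_weighted h_gauss]
  exact integral_eq_zero_of_hasDerivAt_of_integrable (hasDerivAt_mul_darboux P Q)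
    (h_weighted.sub h_gauss)
    (by simpa using integrable_aeval_mul_exp_neg_sq_div_two_div (P * darboux Q) 1)

lemma integral_darboux_hermite_mul_darboux_hermite (k l : ℕ) :
    ∫ x : ℝ, aeval x (darboux (hermite k) * darboux (hermite l)) * Real.exp (-(x ^ 2 / 2)) /
        (1 + x ^ 2) ^ 2 =
      if k = l then (k + 3) * k.factorial * √(2 * Real.pi) else 0 := by
  have h_eigen : hermite k * (X * derivative (hermite l) - derivative (derivative (hermite l)) +
      3 * hermite l) = (l + 3 : ℤ) • (hermite k * hermite l) := by
    rw [derivative_derivative_hermite, zsmul_eq_mul]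
    push_cast
    ring
  rw [integral_darboux_mul_darboux, h_eigen, map_smul, gaussianIntegral_hermite_mul_hermite]
  by_cases hkl : k = l
  · subst hkl
    simp only [↓reduceIte, zsmul_eq_mul]
    push_cast
    ring
  · simp [hkl]

end GaussianIntegral

lemma nuF_ofReal_eq_aeval_darboux_hermite {k : ℕ} (hk : Even k) (x : ℝ) :
    nuF (k + 3) (x : ℂ) =
      ((aeval (√2 * x) (darboux (hermite k)) /
        (-(k + 3) * (hermite k).coeff 0 * √2) : ℝ) : ℂ) := by
  have h_aeval : ((aeval (√2 * x) (darboux (hermite k)) : ℝ) : ℂ) =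
      -(k + 3) * (hermite k).coeff 0 * (√2 : ℝ) * nuF (k + 3) (x : ℂ) := by
    rw [← aeval_darboux_hermite_eq_nuF hk, ← Complex.ofReal_mul]
    exact (aeval_algebraMap_apply ℂ (√2 * x) (darboux (hermite k))).symm
  have h_coeff : ((hermite k).coeff 0 : ℂ) ≠ 0 := mod_cast coeff_zero_hermite_ne_zero hk
  have h_index : (k + 3 : ℂ) ≠ 0 := mod_cast Nat.succ_ne_zero (k + 2)
  have h_sqrt : ((√2 : ℝ) : ℂ) ≠ 0 := by simp
  push_cast
  rw [h_aeval]
  field_simp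

lemma integral_nuF_mul_nuF {k l : ℕ} (hk : Even k) (hl : Even l) :
    ∫ x : ℝ, nuF (k + 3) (x : ℂ) * nuF (l + 3) (x : ℂ) *
        Complex.exp (-(x : ℂ) ^ 2) / (1 + 2 * (x : ℂ) ^ 2) ^ 2 =
      if k = l then
        ((√Real.pi / 2 * (k.factorial / ((k + 3) * (hermite k).coeff 0 ^ 2)) : ℝ) : ℂ)
      else 0 := by
  let scale (k : ℕ) : ℝ := -(k + 3) * (hermite k).coeff 0 * √2
  let weighted (t : ℝ) : ℝ := aeval t (darboux (hermite k) * darboux (hermite l)) *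
    Real.exp (-(t ^ 2 / 2)) / (1 + t ^ 2) ^ 2
  have sqrt_two_mul_sq (x : ℝ) : (√2 * x) ^ 2 = 2 * x ^ 2 := by
    rw [mul_pow, Real.sq_sqrt zero_le_two]
  have integrand_eq (x : ℝ) : nuF (k + 3) (x : ℂ) * nuF (l + 3) (x : ℂ) *
      Complex.exp (-(x : ℂ) ^ 2) / (1 + 2 * (x : ℂ) ^ 2) ^ 2 =
      (((scale k * scale l)⁻¹ * weighted (√2 * x) : ℝ) : ℂ) := by
    rw [nuF_ofReal_eq_aeval_darboux_hermite hk, nuF_ofReal_eq_aeval_darboux_hermite hl, mul_inv]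
    simp only [weighted, scale, sqrt_two_mul_sq, mul_div_cancel_left₀ _ (two_ne_zero (α := ℝ)),
      map_mul]
    push_cast
    ring
  simp_rw [integrand_eq]
  rw [integral_complex_ofReal, integral_const_mul, Measure.integral_comp_mul_left weighted,
    integral_darboux_hermite_mul_darboux_hermite]
  by_cases hkl : k = l
  · subst hkl
    have h_coeff : ((hermite k).coeff 0 : ℝ) ≠ 0 := mod_cast coeff_zero_hermite_ne_zero hk
    rw [if_pos rfl, if_pos rfl, Complex.ofReal_inj, abs_of_pos (by positivity), smul_eq_mul,
      Real.sqrt_mul zero_le_two]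
    simp only [scale]
    field_simp
    rw [Real.sq_sqrt zero_le_two]
  · simp [hkl]

lemma factorial_div_coeff_hermite_sq (r : ℕ) :
    ((2 * r).factorial / ((2 * r + 3) * (hermite (2 * r)).coeff 0 ^ 2) : ℝ) =
      (2 * r + 2) * (2 * r + 1) * (∏ j ∈ Finset.range r, (2 * (r : ℝ) - 2 * j)) ^ 2 /
        (2 * r + 3).factorial := by
  have h_coeff : ((hermite (2 * r)).coeff 0 : ℝ) ≠ 0 :=
    mod_cast coeff_zero_hermite_ne_zero (even_two_mul r)
  have h_fact_sq : ((2 * r).factorial : ℝ) ^ 2 =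
      (∏ j ∈ Finset.range r, (2 * (r : ℝ) - 2 * j)) ^ 2 * (hermite (2 * r)).coeff 0 ^ 2 := by
    have h := congrArg (Int.cast (R := ℝ)) (factorial_two_mul_eq_prod_mul_coeff_hermite r)
    push_cast at h
    rw [h, mul_pow, mul_pow, ← pow_mul, mul_comm r 2, pow_mul, neg_one_sq, one_pow, one_mul]
  rw [Nat.factorial_succ, Nat.factorial_succ, Nat.factorial_succ,
    div_eq_div_iff (by positivity) (by positivity)]
  push_cast
  linear_combination (2 * (r : ℝ) + 3) * (2 * r + 2) * (2 * r + 1) * h_fact_sq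

theorem stmt16 (m n : ℕ) (hm : Odd m) (hn : Odd n) (hm3 : 3 ≤ m) (hn3 : 3 ≤ n) :
    ∫ x : ℝ, nuF m (x : ℂ) * nuF n (x : ℂ) *
        Complex.exp (-(x : ℂ) ^ 2) / (1 + 2 * (x : ℂ) ^ 2) ^ 2
      = if m = n then
          ((Real.sqrt Real.pi * (((n : ℝ) - 1) * ((n : ℝ) - 2)) *
            (∏ j ∈ Finset.Icc 1 ((n - 3) / 2), ((n : ℝ) - 2 * (1 + (j : ℝ)) + 1)) ^ 2 /
              (2 * (Nat.factorial n : ℝ)) : ℝ) : ℂ)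
        else 0 := by
  obtain ⟨q, rfl⟩ : ∃ q, m = 2 * q + 3 := ⟨(m - 3) / 2, by grind⟩
  obtain ⟨r, rfl⟩ : ∃ r, n = 2 * r + 3 := ⟨(n - 3) / 2, by grind⟩
  rw [integral_nuF_mul_nuF (even_two_mul q) (even_two_mul r)]
  by_cases hqr : q = r
  · subst hqr
    have h_prod : ∏ j ∈ Finset.Icc 1 ((2 * q + 3 - 3) / 2),
        (((2 * q + 3 : ℕ) : ℝ) - 2 * (1 + (j : ℝ)) + 1) =
          ∏ j ∈ Finset.range q, (2 * (q : ℝ) - 2 * j) := by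
      rw [show (2 * q + 3 - 3) / 2 = q by omega, prod_Icc_one_eq_prod_range]
      exact Finset.prod_congr rfl fun j _ ↦ by push_cast; ring
    rw [if_pos rfl, if_pos rfl, Complex.ofReal_inj, h_prod]
    push_cast
    linear_combination √Real.pi / 2 * factorial_div_coeff_hermite_sq q
  · simp [hqr]
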